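/- Let m ≥ 1 be an integer and define S(t,r) = (1/|t|)·Q(r/|t|)·e^{i·r²/(4t)} for t < 0, r > 0. Then S satisfies the CSS equation at every point of (−∞,0)×(0,∞); moreover ‖S(t,·)‖_{L²}² = 8π(m+1) for every t < 0, and ‖∂_r S(t,·)‖_{L²} → ∞ as t ↗ 0, so S is an explicit finite-time blowup solution. -/

import Mathlib

open MeasureTheory Set Filter

noncomputable section

/-- The Jackiw–Pi vortex `Q(r) = √8 (m+1) r^m / (1 + r^(2m+2))`. -/
def Q (m : ℕ) (r : ℝ) : ℝ :=
  Real.sqrt 8 * (m + 1) * r ^ m / (1 + r ^ (2 * m + 2))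

/-- `A_θ[u](r) = -(1/2) ∫₀^r |u(r')|² r' dr'`. -/
def Atheta (u : ℝ → ℂ) (r : ℝ) : ℝ :=
  -(1 / 2) * ∫ s in (0:ℝ)..r, ‖u s‖ ^ 2 * s

/-- Bilinear version `A_θ[f,g](r) = -(1/2) ∫₀^r Re(conj f g) r' dr'`. -/
def Atheta2 (f g : ℝ → ℂ) (r : ℝ) : ℝ :=
  -(1 / 2) * ∫ s in (0:ℝ)..r, ((starRingEnd ℂ) (f s) * g s).re * s

/-- `A_t[u](r) = -∫_r^∞ (m + A_θ[u](r')) |u(r')|² / r' dr'`. -/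
def At (m : ℕ) (u : ℝ → ℂ) (r : ℝ) : ℝ :=
  -∫ s in Set.Ioi r, ((m : ℝ) + Atheta u s) * ‖u s‖ ^ 2 / s

/-- Squared (2D radial) `L²` norm: `‖u‖² = 2π ∫₀^∞ |u(r)|² r dr`. -/
def L2sq (u : ℝ → ℂ) : ℝ :=
  2 * Real.pi * ∫ r in Set.Ioi (0:ℝ), ‖u r‖ ^ 2 * r

/-- Squared equivariant `Ḣ¹_m` norm. -/
def H1msq (m : ℕ) (u : ℝ → ℂ) : ℝ :=
  2 * Real.pi * ∫ r in Set.Ioi (0:ℝ), (‖deriv u r‖ ^ 2 + (m : ℝ) ^ 2 * ‖u r‖ ^ 2 / r ^ 2) * r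

/-- The energy functional. -/
def Energy (m : ℕ) (u : ℝ → ℂ) : ℝ :=
  2 * Real.pi * ∫ r in Set.Ioi (0:ℝ),
    ((1 / 2) * ‖deriv u r‖ ^ 2
      + (1 / 2) * (((m : ℝ) + Atheta u r) / r) ^ 2 * ‖u r‖ ^ 2
      - (1 / 4) * ‖u r‖ ^ 4) * r

/-- The Chern–Simons–Schrödinger equation at the point `(t, r)`:
`i ∂_t u - A_t[u] u + ∂_r² u + (1/r) ∂_r u - ((m + A_θ[u])/r)² u + |u|² u = 0`. -/
def CSSeq (m : ℕ) (u : ℝ → ℝ → ℂ) (t r : ℝ) : Prop :=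
  Complex.I * deriv (fun s => u s r) t
    - (At m (u t) r : ℂ) * u t r
    + deriv (deriv (u t)) r
    + (1 / (r : ℂ)) * deriv (u t) r
    - ((((m : ℝ) + Atheta (u t) r) / r : ℝ) : ℂ) ^ 2 * u t r
    + ((‖u t r‖ : ℝ) : ℂ) ^ 2 * u t r = 0

/-- A classical `m`-equivariant solution of CSS on the open interval `I`. -/
structure IsCSS (m : ℕ) (I : Set ℝ) (u : ℝ → ℝ → ℂ) : Prop where
  smooth : ContDiffOn ℝ (⊤ : ℕ∞) (fun p : ℝ × ℝ => u p.1 p.2) (I ×ˢ Set.Ioi (0:ℝ))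
  integrable : ∀ t ∈ I, IntegrableOn (fun r => ‖u t r‖ ^ 2 * r) (Set.Ioi (0:ℝ))
  equivariant : ∃ U : ℝ → ℝ × ℝ → ℂ,
    ContDiffOn ℝ (⊤ : ℕ∞) (fun p : ℝ × (ℝ × ℝ) => U p.1 p.2) (I ×ˢ (Set.univ : Set (ℝ × ℝ))) ∧
    ∀ t ∈ I, ∀ x : ℝ × ℝ, x ≠ 0 →
      U t x = u t (Real.sqrt (x.1 ^ 2 + x.2 ^ 2)) *
        (((x.1 : ℂ) + (x.2 : ℂ) * Complex.I) / ((Real.sqrt (x.1 ^ 2 + x.2 ^ 2) : ℝ) : ℂ)) ^ m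
  bounded : ∀ J : Set ℝ, J ⊆ I → IsCompact J → ∃ C : ℝ, ∀ t ∈ J,
    Real.sqrt (L2sq (u t)) + Real.sqrt (H1msq m (u t)) ≤ C
  eq : ∀ t ∈ I, ∀ r : ℝ, 0 < r → CSSeq m u t r

/-- Tightness: uniformly small mass near spatial infinity. -/
def Tight (I : Set ℝ) (u : ℝ → ℝ → ℂ) : Prop :=
  ∀ η : ℝ, 0 < η → ∃ R : ℝ, ∀ t ∈ I,
    2 * Real.pi * ∫ r in Set.Ioi R, ‖u t r‖ ^ 2 * r < η

/-- The real inner product `(f,g)_r = Re (2π ∫₀^∞ f conj(g) r dr)`. -/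
def iprod (f g : ℝ → ℂ) : ℝ :=
  2 * Real.pi * (∫ r in Set.Ioi (0:ℝ), f r * (starRingEnd ℂ) (g r) * (r : ℂ)).re

/-- `ΛQ = r Q' + Q`. -/
def LamQ (m : ℕ) (r : ℝ) : ℝ := r * deriv (Q m) r + Q m r

/-- The linearized Bogomol'nyi operator `L_Q`. -/
def LQ (m : ℕ) (f : ℝ → ℂ) (r : ℝ) : ℂ :=
  deriv f r - ((((m : ℝ) + Atheta (fun s => (Q m s : ℂ)) r) / r : ℝ) : ℂ) * f r
    - ((2 * Atheta2 (fun s => (Q m s : ℂ)) f r / r : ℝ) : ℂ) * (Q m r : ℂ)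

end

/-!
The vortex `Q` has finite mass and solves the first-order Bogomol'nyi equation
`φ' = (m + A_θ[φ]) / r * φ`. For every such `φ`, integrating `φ φ'` gives `A_t[φ] = φ² / 2`, and
differentiating the first-order equation once more shows that `φ` is a static solution of CSS.
The pseudoconformal transformation `u ↦ |t|⁻¹ u(-1/t, r/|t|) e^{i r² / (4t)}` maps solutions of
CSS to solutions and preserves the mass; applied to the static solution `Q` it produces `S`. As
`Q` is real, `‖∂_r S(t)‖² = t⁻² ‖∂_r Q‖² + ‖r Q‖² / 4`, where both norms on the right are finite
for `m ≥ 1` and the first one is positive.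
-/

open scoped Topology

section Scaling

variable {l : ℝ} {u φ : ℝ → ℂ}

theorem Atheta_of_norm_eq_rescale (hl : 0 < l) (hu : ∀ r, ‖u r‖ = 1 / l * ‖φ (r / l)‖) (r : ℝ) :
    Atheta u r = Atheta φ (r / l) := by
  have hdensity : ∀ s, ‖u s‖ ^ 2 * s = l⁻¹ * (‖φ (s / l)‖ ^ 2 * (s / l)) := fun s ↦ by
    rw [hu]; field_simp
  simp only [Atheta, hdensity, intervalIntegral.integral_const_mul]
  rw [intervalIntegral.integral_comp_div (fun s ↦ ‖φ s‖ ^ 2 * s) hl.ne', zero_div, smul_eq_mul,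
    inv_mul_cancel_left₀ hl.ne']

theorem integral_Ioi_comp_div (f : ℝ → ℝ) (a : ℝ) (hl : 0 < l) :
    ∫ s in Ioi a, f (s / l) = l * ∫ s in Ioi (a / l), f s := by
  simpa only [div_eq_inv_mul, inv_inv, smul_eq_mul] using
    integral_comp_mul_left_Ioi f a (inv_pos.2 hl)

theorem At_of_norm_eq_rescale (m : ℕ) (hl : 0 < l) (hu : ∀ r, ‖u r‖ = 1 / l * ‖φ (r / l)‖)
    (r : ℝ) : At m u r = At m φ (r / l) / l ^ 2 := by
  have hdensity : ∀ s, (m + Atheta u s) * ‖u s‖ ^ 2 / s =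
      (l ^ 3)⁻¹ * ((m + Atheta φ (s / l)) * ‖φ (s / l)‖ ^ 2 / (s / l)) := fun s ↦ by
    rw [Atheta_of_norm_eq_rescale hl hu, hu]; field_simp
  simp only [At, hdensity, integral_const_mul]
  rw [integral_Ioi_comp_div (fun s ↦ (m + Atheta φ s) * ‖φ s‖ ^ 2 / s) r hl]
  field_simp

theorem L2sq_of_norm_eq_rescale (hl : 0 < l) (hu : ∀ r, ‖u r‖ = 1 / l * ‖φ (r / l)‖) :
    L2sq u = L2sq φ := by
  have hdensity : ∀ s, ‖u s‖ ^ 2 * s = l⁻¹ * (‖φ (s / l)‖ ^ 2 * (s / l)) := fun s ↦ by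
    rw [hu]; field_simp
  simp only [L2sq, hdensity, integral_const_mul]
  rw [integral_Ioi_comp_div (fun s ↦ ‖φ s‖ ^ 2 * s) 0 hl, zero_div, inv_mul_cancel_left₀ hl.ne']

end Scaling

section Pseudoconformal

/-- The phase `e^{i r² / (4t)}` of the pseudoconformal transform (equal to `1` at `t = 0`). -/
noncomputable def quadraticPhase (t r : ℝ) : ℂ :=
  Complex.exp (Complex.I * (r : ℂ) ^ 2 / (4 * (t : ℂ)))

/-- The time slice at `t` of the pseudoconformal transform: the profile `φ` is rescaled to the
length `|t|`, preserving its mass, and multiplied by the quadratic phase `e^{i r² / (4t)}`. -/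
noncomputable def pseudoconformalSlice (t : ℝ) (φ : ℝ → ℂ) (r : ℝ) : ℂ :=
  ((1 / |t| : ℝ) : ℂ) * φ (r / |t|) * quadraticPhase t r

/-- The pseudoconformal transform `(t, r) ↦ |t|⁻¹ u(-1/t, r/|t|) e^{i r² / (4t)}` of `u`, a
symmetry of CSS on `t ≠ 0`. -/
noncomputable def pseudoconformal (u : ℝ → ℝ → ℂ) (t : ℝ) : ℝ → ℂ :=
  pseudoconformalSlice t (u (-t⁻¹))

variable {t r : ℝ} {φ : ℝ → ℂ} {φ' : ℂ}

theorem norm_quadraticPhase (t r : ℝ) : ‖quadraticPhase t r‖ = 1 := by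
  have hphase : Complex.I * (r : ℂ) ^ 2 / (4 * (t : ℂ)) =
      Complex.I * ((r ^ 2 / (4 * t) : ℝ) : ℂ) := by
    push_cast; ring
  rw [quadraticPhase, hphase, Complex.norm_exp_I_mul_ofReal]

theorem norm_pseudoconformalSlice (t : ℝ) (φ : ℝ → ℂ) (r : ℝ) :
    ‖pseudoconformalSlice t φ r‖ = 1 / |t| * ‖φ (r / |t|)‖ := by
  rw [pseudoconformalSlice, norm_mul, norm_mul, norm_quadraticPhase, mul_one,
    Complex.norm_of_nonneg (by positivity)]

theorem L2sq_pseudoconformalSlice (ht : t ≠ 0) (φ : ℝ → ℂ) :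
    L2sq (pseudoconformalSlice t φ) = L2sq φ :=
  L2sq_of_norm_eq_rescale (abs_pos.2 ht) (norm_pseudoconformalSlice t φ)

theorem hasDerivAt_quadraticPhase (t r : ℝ) :
    HasDerivAt (quadraticPhase t) (Complex.I * r / (2 * t) * quadraticPhase t r) r := by
  refine ((((hasDerivAt_id' r).ofReal_comp.fun_pow 2).const_mul Complex.I).div_const
    (4 * (t : ℂ))).cexp.congr_deriv ?_
  rw [quadraticPhase]
  push_cast
  ring

theorem hasDerivAt_quadraticPhase_time (ht : t ≠ 0) (r : ℝ) :
    HasDerivAt (fun s ↦ quadraticPhase s r)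
      (-(Complex.I * r ^ 2 / (4 * t ^ 2)) * quadraticPhase t r) t := by
  have htC : (t : ℂ) ≠ 0 := Complex.ofReal_ne_zero.2 ht
  refine ((hasDerivAt_const t (Complex.I * (r : ℂ) ^ 2)).fun_div
    ((hasDerivAt_id' t).ofReal_comp.const_mul 4) (by simpa using htC)).cexp.congr_deriv ?_
  rw [quadraticPhase]
  push_cast
  field_simp
  ring

theorem hasDerivAt_comp_div {l : ℝ} (hφ : HasDerivAt φ φ' (r / l)) :
    HasDerivAt (fun x ↦ φ (x / l)) (φ' / l) r := by
  refine (hφ.scomp r ((hasDerivAt_id' r).div_const l)).congr_deriv ?_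
  rw [Complex.real_smul]
  push_cast
  ring

theorem hasDerivAt_pseudoconformalSlice (hφ : HasDerivAt φ φ' (r / |t|)) :
    HasDerivAt (pseudoconformalSlice t φ)
      (((1 / |t| : ℝ) : ℂ) * (φ' / (|t| : ℝ) + Complex.I * r / (2 * t) * φ (r / |t|)) *
        quadraticPhase t r) r := by
  refine (((hasDerivAt_comp_div hφ).const_mul ((1 / |t| : ℝ) : ℂ)).fun_mul
    (hasDerivAt_quadraticPhase t r)).congr_deriv ?_
  ring

theorem hasDerivAt_deriv_pseudoconformalSlice {φ'' : ℂ}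
    (hφ : ∀ᶠ x in 𝓝 (r / |t|), DifferentiableAt ℝ φ x)
    (hφ' : HasDerivAt (deriv φ) φ'' (r / |t|)) :
    HasDerivAt (deriv (pseudoconformalSlice t φ))
      (((1 / |t| : ℝ) : ℂ) * (φ'' / (|t| : ℝ) ^ 2 +
          Complex.I * r / (t * (|t| : ℝ)) * deriv φ (r / |t|) +
          (Complex.I / (2 * t) - r ^ 2 / (4 * t ^ 2)) * φ (r / |t|)) *
        quadraticPhase t r) r := by
  have hderiv : deriv (pseudoconformalSlice t φ) =ᶠ[𝓝 r] fun x ↦ ((1 / |t| : ℝ) : ℂ) *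
      (deriv φ (x / |t|) / (|t| : ℝ) + Complex.I * x / (2 * t) * φ (x / |t|)) *
        quadraticPhase t x := by
    filter_upwards [(continuous_id.div_const |t|).continuousAt.eventually hφ] with x hx
    exact (hasDerivAt_pseudoconformalSlice hx.hasDerivAt).deriv
  have hlin : HasDerivAt (fun x : ℝ ↦ Complex.I * (x : ℂ) / (2 * t)) (Complex.I / (2 * t)) r := by
    simpa using ((hasDerivAt_id' r).ofReal_comp.const_mul Complex.I).div_const (2 * (t : ℂ))
  have hprod := ((((hasDerivAt_comp_div hφ').div_const ((|t| : ℝ) : ℂ)).fun_add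
    (hlin.fun_mul (hasDerivAt_comp_div hφ.self_of_nhds.hasDerivAt))).const_mul
      ((1 / |t| : ℝ) : ℂ)).fun_mul (hasDerivAt_quadraticPhase t r)
  refine (hprod.congr_of_eventuallyEq hderiv).congr_deriv ?_
  linear_combination ((1 / |t| : ℝ) : ℂ) * ((r : ℂ) ^ 2 / (4 * t ^ 2)) * φ (r / |t|) *
    quadraticPhase t r * Complex.I_sq

theorem hasDerivAt_one_div_abs (ht : t ≠ 0) :
    HasDerivAt (fun s : ℝ ↦ 1 / |s|) (-(1 / |t|) / t) t := by
  have habs : |t| ≠ 0 := abs_ne_zero.2 ht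
  have hderiv := (hasDerivAt_abs ht).fun_inv habs
  simp only [← one_div] at hderiv
  refine hderiv.congr_deriv ?_
  have hsign : (SignType.sign t : ℝ) * t = |t| := sign_mul_self t
  field_simp
  linear_combination (norm := ring_nf) -hsign

/-- The chain rule along the curve `s ↦ (-1/s, r/|s|)`, which is tangent to
`t⁻² ∂_t - (r/(t|t|)) ∂_r`. -/
theorem hasDerivAt_comp_pseudoconformal {u : ℝ → ℝ → ℂ} (ht : t ≠ 0)
    (hu : DifferentiableAt ℝ (Function.uncurry u) (-t⁻¹, r / |t|)) :
    HasDerivAt (fun s ↦ u (-s⁻¹) (r / |s|))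
      (deriv (fun s ↦ u s (r / |t|)) (-t⁻¹) / t ^ 2 -
        r / (t * (|t| : ℝ)) * deriv (u (-t⁻¹)) (r / |t|)) t := by
  set L := fderiv ℝ (Function.uncurry u) (-t⁻¹, r / |t|)
  have htime : HasDerivAt (fun s ↦ u s (r / |t|)) (L (1, 0)) (-t⁻¹) :=
    hu.hasFDerivAt.comp_hasDerivAt (f := fun s ↦ (s, r / |t|)) (-t⁻¹)
      ((hasDerivAt_id' (-t⁻¹)).prodMk (hasDerivAt_const _ (r / |t|)))
  have hspace : HasDerivAt (u (-t⁻¹)) (L (0, 1)) (r / |t|) :=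
    hu.hasFDerivAt.comp_hasDerivAt (r / |t|)
      ((hasDerivAt_const _ (-t⁻¹)).prodMk (hasDerivAt_id' (r / |t|)))
  have hcurve : HasDerivAt (fun s : ℝ ↦ (-s⁻¹, r / |s|)) ((t ^ 2)⁻¹, -(r / (t * |t|))) t := by
    have hradius := (hasDerivAt_one_div_abs ht).const_mul r
    simp only [mul_one_div] at hradius
    exact ((hasDerivAt_inv ht).fun_neg.congr_deriv (neg_neg _)).prodMk
      (hradius.congr_deriv (by field_simp))
  have hsplit : L ((t ^ 2)⁻¹, -(r / (t * |t|))) =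
      (t ^ 2)⁻¹ • L (1, 0) + (-(r / (t * |t|))) • L (0, 1) := by
    rw [← map_smul, ← map_smul, ← map_add]
    simp
  refine (hu.hasFDerivAt.comp_hasDerivAt t hcurve).congr_deriv ?_
  rw [hsplit, htime.deriv, hspace.deriv, Complex.real_smul, Complex.real_smul]
  push_cast
  ring

theorem hasDerivAt_pseudoconformal {u : ℝ → ℝ → ℂ} (ht : t ≠ 0)
    (hu : DifferentiableAt ℝ (Function.uncurry u) (-t⁻¹, r / |t|)) :
    HasDerivAt (fun s ↦ pseudoconformal u s r)
      (((1 / |t| : ℝ) : ℂ) * (deriv (fun s ↦ u s (r / |t|)) (-t⁻¹) / t ^ 2 -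
          r / (t * (|t| : ℝ)) * deriv (u (-t⁻¹)) (r / |t|) -
          (1 / t + Complex.I * r ^ 2 / (4 * t ^ 2)) * u (-t⁻¹) (r / |t|)) *
        quadraticPhase t r) t := by
  refine (((hasDerivAt_one_div_abs ht).ofReal_comp.fun_mul
    (hasDerivAt_comp_pseudoconformal ht hu)).fun_mul
      (hasDerivAt_quadraticPhase_time ht r)).congr_deriv ?_
  push_cast
  ring

theorem CSSeq.map_pseudoconformal {m : ℕ} {u : ℝ → ℝ → ℂ}
    (hcss : CSSeq m u (-t⁻¹) (r / |t|)) (ht : t ≠ 0) (hr : r ≠ 0)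
    (hu : DifferentiableAt ℝ (Function.uncurry u) (-t⁻¹, r / |t|))
    (hur : ∀ᶠ x in 𝓝 (r / |t|), DifferentiableAt ℝ (u (-t⁻¹)) x)
    (hurr : DifferentiableAt ℝ (deriv (u (-t⁻¹))) (r / |t|)) :
    CSSeq m (pseudoconformal u) t r := by
  have htC : (t : ℂ) ≠ 0 := Complex.ofReal_ne_zero.2 ht
  have hrC : (r : ℂ) ≠ 0 := Complex.ofReal_ne_zero.2 hr
  have hnorm := norm_pseudoconformalSlice t (u (-t⁻¹))
  have hAtheta := Atheta_of_norm_eq_rescale (abs_pos.2 ht) hnorm r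
  have hAt := At_of_norm_eq_rescale m (abs_pos.2 ht) hnorm r
  unfold CSSeq at hcss ⊢
  rw [(hasDerivAt_pseudoconformal ht hu).deriv]
  simp only [pseudoconformal]
  rw [(hasDerivAt_deriv_pseudoconformalSlice hur hurr.hasDerivAt).deriv,
    (hasDerivAt_pseudoconformalSlice hur.self_of_nhds.hasDerivAt).deriv, hAtheta, hAt, hnorm]
  simp only [pseudoconformalSlice]
  generalize quadraticPhase t r = phase
  linear_combination (norm := skip) phase / ((|t| : ℝ) : ℂ) ^ 3 * hcss -
    phase / ((|t| : ℝ) : ℂ) * (r ^ 2 / (4 * t ^ 2)) * u (-t⁻¹) (r / |t|) * Complex.I_sq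
  rcases abs_choice t with habs | habs <;>
  · simp only [habs]
    push_cast
    field_simp
    ring

end Pseudoconformal

section RealProfile

variable {t r : ℝ} {φ : ℝ → ℝ}

theorem deriv_ofReal_comp (φ : ℝ → ℝ) :
    deriv (fun s ↦ (φ s : ℂ)) = fun r ↦ ((deriv φ r : ℝ) : ℂ) := by
  ext r
  by_cases hφ : DifferentiableAt ℝ φ r
  · exact hφ.hasDerivAt.ofReal_comp.deriv
  · have hφC : ¬DifferentiableAt ℝ (fun s ↦ (φ s : ℂ)) r := fun h ↦
      hφ (Complex.reCLM.differentiableAt.comp r h)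
    rw [deriv_zero_of_not_differentiableAt hφ, deriv_zero_of_not_differentiableAt hφC,
      Complex.ofReal_zero]

theorem Atheta_ofReal (φ : ℝ → ℝ) (r : ℝ) :
    Atheta (fun s ↦ (φ s : ℂ)) r = -(1 / 2) * ∫ s in (0 : ℝ)..r, φ s ^ 2 * s := by
  simp only [Atheta, Complex.norm_real, Real.norm_eq_abs, sq_abs]

-- The phase contributes orthogonally because `φ` is real.
theorem norm_sq_deriv_pseudoconformalSlice_ofReal (hφ : DifferentiableAt ℝ φ (r / |t|)) :
    ‖deriv (pseudoconformalSlice t fun s ↦ (φ s : ℂ)) r‖ ^ 2 =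
      (t ^ 2)⁻¹ * ((t ^ 2)⁻¹ * deriv φ (r / |t|) ^ 2 +
        1 / 4 * ((r / |t|) ^ 2 * φ (r / |t|) ^ 2)) := by
  have hcartesian : ((deriv φ (r / |t|) : ℝ) : ℂ) / (|t| : ℝ) +
      Complex.I * r / (2 * t) * φ (r / |t|) =
        ((deriv φ (r / |t|) / |t| : ℝ) : ℂ) +
          ((r / (2 * t) * φ (r / |t|) : ℝ) : ℂ) * Complex.I := by
    push_cast; ring
  rw [(hasDerivAt_pseudoconformalSlice hφ.hasDerivAt.ofReal_comp).deriv, hcartesian,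
    norm_mul, norm_mul, norm_quadraticPhase, mul_one, mul_pow,
    ← Complex.normSq_eq_norm_sq (_ + _), Complex.normSq_add_mul_I,
    Complex.norm_of_nonneg (by positivity)]
  simp only [div_pow, mul_pow, one_pow, sq_abs]
  ring

theorem integral_norm_sq_deriv_pseudoconformalSlice_ofReal (ht : t ≠ 0)
    (hφ : ∀ r, 0 < r → DifferentiableAt ℝ φ r)
    (hkinetic : IntegrableOn (fun r ↦ deriv φ r ^ 2 * r) (Ioi 0))
    (hvariance : IntegrableOn (fun r ↦ φ r ^ 2 * r ^ 3) (Ioi 0)) :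
    ∫ r in Ioi (0 : ℝ), ‖deriv (pseudoconformalSlice t fun s ↦ (φ s : ℂ)) r‖ ^ 2 * r =
      (t ^ 2)⁻¹ * (∫ r in Ioi (0 : ℝ), deriv φ r ^ 2 * r) +
        1 / 4 * ∫ r in Ioi (0 : ℝ), φ r ^ 2 * r ^ 3 := by
  have habs : 0 < |t| := abs_pos.2 ht
  let density : ℝ → ℝ := fun x ↦ (t ^ 2)⁻¹ * (deriv φ x ^ 2 * x) + 1 / 4 * (φ x ^ 2 * x ^ 3)
  calc
    _ = ∫ r in Ioi (0 : ℝ), |t|⁻¹ * density (r / |t|) :=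
      setIntegral_congr_fun measurableSet_Ioi fun r hr ↦ by
        simp only [density]
        rw [norm_sq_deriv_pseudoconformalSlice_ofReal (hφ _ (div_pos hr habs)), ← sq_abs t]
        field_simp
    _ = ∫ r in Ioi (0 : ℝ), density r := by
      rw [integral_const_mul, integral_Ioi_comp_div density 0 habs, zero_div,
        inv_mul_cancel_left₀ habs.ne']
    _ = _ := by
      rw [integral_add (hkinetic.const_mul _) (hvariance.const_mul _), integral_const_mul,
        integral_const_mul]

theorem tendsto_sqrt_integral_norm_sq_deriv_pseudoconformalSlice_ofReal
    (hφ : ∀ r, 0 < r → DifferentiableAt ℝ φ r)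
    (hkinetic : IntegrableOn (fun r ↦ deriv φ r ^ 2 * r) (Ioi 0))
    (hvariance : IntegrableOn (fun r ↦ φ r ^ 2 * r ^ 3) (Ioi 0))
    (hpos : 0 < ∫ r in Ioi (0 : ℝ), deriv φ r ^ 2 * r) :
    Tendsto (fun t ↦ √(2 * Real.pi *
        ∫ r in Ioi (0 : ℝ), ‖deriv (pseudoconformalSlice t fun s ↦ (φ s : ℂ)) r‖ ^ 2 * r))
      (𝓝[≠] 0) atTop := by
  have hinv : Tendsto (fun t : ℝ ↦ (t ^ 2)⁻¹) (𝓝[≠] 0) atTop := by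
    refine ((tendsto_pow_atTop two_ne_zero).comp
      tendsto_norm_inv_nhdsNE_zero_atTop).congr fun t ↦ ?_
    simp
  refine Real.tendsto_sqrt_atTop.comp (Tendsto.const_mul_atTop (by positivity) ?_)
  refine (tendsto_atTop_add_const_right _ (1 / 4 * ∫ r in Ioi (0 : ℝ), φ r ^ 2 * r ^ 3)
    (hinv.atTop_mul_const hpos)).congr' ?_
  filter_upwards [self_mem_nhdsWithin] with t ht
  exact (integral_norm_sq_deriv_pseudoconformalSlice_ofReal ht hφ hkinetic hvariance).symm

end RealProfile

/-- A finite-mass real solution of the first-order Bogomol'nyi (self-duality) equation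
`φ' = (m + A_θ[φ]) / r * φ` on `(0, ∞)`; such profiles are static solutions of CSS. Values of `φ`
on `(-∞, 0]` are irrelevant. -/
structure IsSelfDualVortex (m : ℕ) (φ : ℝ → ℝ) : Prop where
  integrableOn_sq_mul_self : IntegrableOn (fun r ↦ φ r ^ 2 * r) (Ioi 0)
  hasDerivAt : ∀ r, 0 < r → HasDerivAt φ ((m + Atheta (fun s ↦ (φ s : ℂ)) r) / r * φ r) r

namespace IsSelfDualVortex

variable {m : ℕ} {φ : ℝ → ℝ} {r : ℝ}

theorem hasDerivAt_Atheta (hφ : IsSelfDualVortex m φ) (hr : 0 < r) :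
    HasDerivAt (Atheta fun s ↦ (φ s : ℂ)) (-(1 / 2) * (φ r ^ 2 * r)) r := by
  have hint : IntervalIntegrable (fun s ↦ φ s ^ 2 * s) volume 0 r :=
    (intervalIntegrable_iff_integrableOn_Ioc_of_le hr.le).2
      (hφ.integrableOn_sq_mul_self.mono_set Ioc_subset_Ioi_self)
  have hmeas : StronglyMeasurableAtFilter (fun s ↦ φ s ^ 2 * s) (𝓝 r) :=
    ⟨Ioi 0, Ioi_mem_nhds hr, hφ.integrableOn_sq_mul_self.aestronglyMeasurable⟩
  have hcont : ContinuousAt (fun s ↦ φ s ^ 2 * s) r :=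
    ((hφ.hasDerivAt r hr).continuousAt.pow 2).mul continuousAt_id
  rw [funext (Atheta_ofReal φ)]
  exact (intervalIntegral.integral_hasDerivAt_right hint hmeas hcont).const_mul _

theorem hasDerivAt_deriv (hφ : IsSelfDualVortex m φ) (hr : 0 < r) :
    HasDerivAt (deriv φ)
      (-(1 / 2) * φ r ^ 3 - (m + Atheta (fun s ↦ (φ s : ℂ)) r) / r ^ 2 * φ r +
        ((m + Atheta (fun s ↦ (φ s : ℂ)) r) / r) ^ 2 * φ r) r := by
  have hderiv : deriv φ =ᶠ[𝓝 r] fun s ↦ (m + Atheta (fun s ↦ (φ s : ℂ)) s) / s * φ s := by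
    filter_upwards [Ioi_mem_nhds hr] with s hs using (hφ.hasDerivAt s hs).deriv
  have hprod := ((((hφ.hasDerivAt_Atheta hr).const_add (m : ℝ)).fun_div (hasDerivAt_id' r)
    hr.ne').fun_mul (hφ.hasDerivAt r hr))
  refine (hprod.congr_of_eventuallyEq hderiv).congr_deriv ?_
  field_simp

theorem abs_add_Atheta_le (hφ : IsSelfDualVortex m φ) (hr : 0 < r) :
    |m + Atheta (fun s ↦ (φ s : ℂ)) r| ≤ m + 1 / 2 * ∫ s in Ioi (0 : ℝ), φ s ^ 2 * s := by
  have hnonneg : 0 ≤ᵐ[volume.restrict (Ioi 0)] fun s ↦ φ s ^ 2 * s :=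
    ae_restrict_of_forall_mem measurableSet_Ioi fun s hs ↦ mul_nonneg (sq_nonneg _) (le_of_lt hs)
  have hle : ∫ s in (0 : ℝ)..r, φ s ^ 2 * s ≤ ∫ s in Ioi (0 : ℝ), φ s ^ 2 * s := by
    rw [intervalIntegral.integral_of_le hr.le]
    exact setIntegral_mono_set hφ.integrableOn_sq_mul_self hnonneg
      Ioc_subset_Ioi_self.eventuallyLE
  have hpartial : 0 ≤ ∫ s in (0 : ℝ)..r, φ s ^ 2 * s :=
    intervalIntegral.integral_nonneg hr.le fun s hs ↦ mul_nonneg (sq_nonneg _) hs.1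
  rw [Atheta_ofReal, abs_le]
  constructor <;> linarith [(m.cast_nonneg : (0 : ℝ) ≤ m)]

theorem exists_abs_deriv_le (hφ : IsSelfDualVortex m φ) (hr : 0 < r) :
    ∃ C, ∀ s, r ≤ s → |deriv φ s| ≤ C * |φ s| := by
  refine ⟨(m + 1 / 2 * ∫ x in Ioi (0 : ℝ), φ x ^ 2 * x) / r, fun s hs ↦ ?_⟩
  have hs0 : 0 < s := hr.trans_le hs
  have hcharge := hφ.abs_add_Atheta_le hs0
  rw [(hφ.hasDerivAt s hs0).deriv, abs_mul, abs_div, abs_of_pos hs0]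
  exact mul_le_mul_of_nonneg_right
    (div_le_div₀ ((abs_nonneg _).trans hcharge) hcharge hr hs) (abs_nonneg _)

theorem aestronglyMeasurable (hφ : IsSelfDualVortex m φ) (hr : 0 ≤ r) :
    AEStronglyMeasurable φ (volume.restrict (Ioi r)) :=
  ContinuousOn.aestronglyMeasurable (fun s hs ↦
    (hφ.hasDerivAt s (hr.trans_lt hs)).continuousAt.continuousWithinAt) measurableSet_Ioi

theorem integrableOn_sq (hφ : IsSelfDualVortex m φ) (hr : 0 < r) :
    IntegrableOn (fun s ↦ φ s ^ 2) (Ioi r) := by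
  refine ((hφ.integrableOn_sq_mul_self.mono_set (Ioi_subset_Ioi hr.le)).const_mul r⁻¹).mono'
    ((hφ.aestronglyMeasurable hr.le).pow 2) ?_
  refine ae_restrict_of_forall_mem measurableSet_Ioi fun s (hs : r < s) ↦ ?_
  rw [Real.norm_of_nonneg (sq_nonneg _), ← div_eq_inv_mul, le_div_iff₀ hr]
  gcongr

theorem integrableOn_mul_deriv (hφ : IsSelfDualVortex m φ) (hr : 0 < r) :
    IntegrableOn (fun s ↦ φ s * deriv φ s) (Ioi r) := by
  obtain ⟨C, hC⟩ := hφ.exists_abs_deriv_le hr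
  refine ((hφ.integrableOn_sq hr).const_mul C).mono'
    ((hφ.aestronglyMeasurable hr.le).mul (measurable_deriv φ).aestronglyMeasurable) ?_
  refine ae_restrict_of_forall_mem measurableSet_Ioi fun s (hs : r < s) ↦ ?_
  calc ‖φ s * deriv φ s‖ = |φ s| * |deriv φ s| := by simp only [norm_mul, Real.norm_eq_abs]
    _ ≤ |φ s| * (C * |φ s|) := by gcongr; exact hC s hs.le
    _ = C * φ s ^ 2 := by rw [← sq_abs (φ s)]; ring

theorem integrableOn_deriv_sq_mul_self (hφ : IsSelfDualVortex m φ) (hr : 0 < r) :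
    IntegrableOn (fun s ↦ deriv φ s ^ 2 * s) (Ioi r) := by
  obtain ⟨C, hC⟩ := hφ.exists_abs_deriv_le hr
  refine ((hφ.integrableOn_sq_mul_self.mono_set (Ioi_subset_Ioi hr.le)).const_mul (C ^ 2)).mono'
    (((measurable_deriv φ).pow_const 2).mul measurable_id).aestronglyMeasurable ?_
  refine ae_restrict_of_forall_mem measurableSet_Ioi fun s (hs : r < s) ↦ ?_
  have hs0 : 0 < s := hr.trans hs
  calc ‖deriv φ s ^ 2 * s‖ = |deriv φ s| ^ 2 * s := by
        rw [Real.norm_of_nonneg (by positivity), sq_abs]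
    _ ≤ (C * |φ s|) ^ 2 * s := by gcongr; exact hC s hs.le
    _ = C ^ 2 * (φ s ^ 2 * s) := by rw [mul_pow, sq_abs]; ring

theorem hasDerivAt_half_sq (hφ : IsSelfDualVortex m φ) (hr : 0 < r) :
    HasDerivAt (fun s ↦ φ s ^ 2 / 2) (φ r * deriv φ r) r := by
  refine (((hφ.hasDerivAt r hr).differentiableAt.hasDerivAt.fun_pow 2).div_const 2).congr_deriv ?_
  push_cast
  ring

theorem tendsto_half_sq_atTop (hφ : IsSelfDualVortex m φ) :
    Tendsto (fun s ↦ φ s ^ 2 / 2) atTop (𝓝 0) :=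
  tendsto_zero_of_hasDerivAt_of_integrableOn_Ioi
    (fun _ hs ↦ hφ.hasDerivAt_half_sq (zero_lt_one.trans hs))
    (hφ.integrableOn_mul_deriv zero_lt_one) ((hφ.integrableOn_sq zero_lt_one).div_const 2)

theorem At_eq (hφ : IsSelfDualVortex m φ) (hr : 0 < r) :
    At m (fun s ↦ (φ s : ℂ)) r = φ r ^ 2 / 2 := by
  have hdensity : ∀ s ∈ Ioi r, (m + Atheta (fun s ↦ (φ s : ℂ)) s) * ‖(φ s : ℂ)‖ ^ 2 / s =
      φ s * deriv φ s := fun s hs ↦ by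
    rw [(hφ.hasDerivAt s (hr.trans hs)).deriv, Complex.norm_real, Real.norm_eq_abs, sq_abs]
    ring
  rw [At, setIntegral_congr_fun measurableSet_Ioi hdensity,
    integral_Ioi_of_hasDerivAt_of_tendsto'
      (fun s hs ↦ hφ.hasDerivAt_half_sq (hr.trans_le hs)) (hφ.integrableOn_mul_deriv hr)
      hφ.tendsto_half_sq_atTop]
  ring

theorem CSSeq_const (hφ : IsSelfDualVortex m φ) (t : ℝ) (hr : 0 < r) :
    CSSeq m (fun _ s ↦ (φ s : ℂ)) t r := by
  have hrC : (r : ℂ) ≠ 0 := Complex.ofReal_ne_zero.2 hr.ne'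
  have hnorm : ((‖(φ r : ℂ)‖ : ℝ) : ℂ) ^ 2 = (φ r : ℂ) ^ 2 := by
    rw [Complex.norm_real, ← Complex.ofReal_pow, Real.norm_eq_abs, sq_abs, Complex.ofReal_pow]
  simp only [CSSeq, hφ.At_eq hr, hnorm, deriv_ofReal_comp, deriv_const,
    (hφ.hasDerivAt r hr).deriv, (hφ.hasDerivAt_deriv hr).deriv]
  push_cast
  field_simp
  ring

theorem CSSeq_pseudoconformal (hφ : IsSelfDualVortex m φ) {t : ℝ} (ht : t ≠ 0) (hr : 0 < r) :
    CSSeq m (pseudoconformal fun _ s ↦ (φ s : ℂ)) t r := by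
  have hρ : 0 < r / |t| := div_pos hr (abs_pos.2 ht)
  have hdiff : ∀ s, 0 < s → DifferentiableAt ℝ (fun s ↦ (φ s : ℂ)) s := fun s hs ↦
    (hφ.hasDerivAt s hs).ofReal_comp.differentiableAt
  refine (hφ.CSSeq_const _ hρ).map_pseudoconformal ht hr.ne' ?_ ?_ ?_
  · exact (hdiff _ hρ).comp (f := Prod.snd) (-t⁻¹, r / |t|) differentiableAt_snd
  · filter_upwards [Ioi_mem_nhds hρ] with s hs using hdiff s hs
  · rw [deriv_ofReal_comp]
    exact (hφ.hasDerivAt_deriv hρ).ofReal_comp.differentiableAt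

end IsSelfDualVortex

section JackiwPi

variable (m : ℕ)

theorem one_add_pow_pos (r : ℝ) : 0 < 1 + r ^ (2 * m + 2) := by
  have : Even (2 * m + 2) := ⟨m + 1, by ring⟩
  linarith [this.pow_nonneg r]

theorem Q_sq (r : ℝ) :
    Q m r ^ 2 = 8 * (m + 1) ^ 2 * r ^ (2 * m) / (1 + r ^ (2 * m + 2)) ^ 2 := by
  rw [Q, div_pow, mul_pow, mul_pow, Real.sq_sqrt (by norm_num), ← pow_mul, mul_comm m 2]

theorem contDiff_Q : ContDiff ℝ 1 (Q m) := by
  unfold Q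
  exact ContDiff.div (by fun_prop) (by fun_prop) fun r ↦ (one_add_pow_pos m r).ne'

theorem hasDerivAt_Q_sq_mul_self_primitive (r : ℝ) :
    HasDerivAt (fun s : ℝ ↦ -4 * (m + 1) / (1 + s ^ (2 * m + 2))) (Q m r ^ 2 * r) r := by
  have hden := one_add_pow_pos m r
  refine ((hasDerivAt_const r (-4 * ((m : ℝ) + 1))).fun_div
    ((hasDerivAt_pow (2 * m + 2) r).const_add 1) hden.ne').congr_deriv ?_
  rw [Q_sq]
  push_cast
  field_simp
  ring

theorem add_Atheta_Q (r : ℝ) :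
    m + Atheta (fun s ↦ (Q m s : ℂ)) r =
      (m - (m + 2) * r ^ (2 * m + 2)) / (1 + r ^ (2 * m + 2)) := by
  have hcont := (contDiff_Q m).continuous
  have hden := one_add_pow_pos m r
  rw [Atheta_ofReal, intervalIntegral.integral_eq_sub_of_hasDerivAt
    (fun s _ ↦ hasDerivAt_Q_sq_mul_self_primitive m s)
    (Continuous.intervalIntegrable (by fun_prop) _ _), zero_pow (by lia)]
  field_simp
  ring

theorem pow_le_one_add_pow_sq {j n : ℕ} (hj : j ≤ 2 * n) {r : ℝ} (hr : 0 ≤ r) :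
    r ^ j ≤ (1 + r ^ n) ^ 2 := by
  have hn : 0 ≤ r ^ n := by positivity
  rcases le_total r 1 with h | h
  · nlinarith [pow_le_one₀ (n := j) hr h]
  · nlinarith [pow_le_pow_right₀ h hj, pow_mul' r 2 n]

theorem integrableOn_Ioi_pow_div_one_add_pow_sq {k n : ℕ} (hk : k + 2 ≤ 2 * n) :
    IntegrableOn (fun r : ℝ ↦ r ^ k / (1 + r ^ n) ^ 2) (Ioi 0) := by
  refine (integrable_inv_one_add_sq.const_mul 2).integrableOn.mono'
    (Measurable.aestronglyMeasurable (by fun_prop)) ?_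
  refine ae_restrict_of_forall_mem measurableSet_Ioi fun r (hr : 0 < r) ↦ ?_
  rw [Real.norm_of_nonneg (by positivity), ← div_eq_mul_inv,
    div_le_div_iff₀ (by positivity) (by positivity)]
  calc r ^ k * (1 + r ^ 2) = r ^ k + r ^ (k + 2) := by ring
    _ ≤ (1 + r ^ n) ^ 2 + (1 + r ^ n) ^ 2 :=
      add_le_add (pow_le_one_add_pow_sq (by lia) hr.le) (pow_le_one_add_pow_sq hk hr.le)
    _ = 2 * (1 + r ^ n) ^ 2 := by ring

theorem integrableOn_Q_sq_mul_pow {k : ℕ} (hk : k ≤ 2 * m + 2) :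
    IntegrableOn (fun r ↦ Q m r ^ 2 * r ^ k) (Ioi 0) := by
  refine ((integrableOn_Ioi_pow_div_one_add_pow_sq (k := 2 * m + k) (n := 2 * m + 2)
    (by lia)).const_mul (8 * ((m : ℝ) + 1) ^ 2)).congr (ae_of_all _ fun r ↦ ?_)
  simp only [Q_sq, pow_add r (2 * m) k]
  ring

theorem isSelfDualVortex_Q : IsSelfDualVortex m (Q m) where
  integrableOn_sq_mul_self := by
    simpa only [pow_one] using integrableOn_Q_sq_mul_pow m (k := 1) (by lia)
  hasDerivAt r hr := by
    have hden := one_add_pow_pos m r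
    refine (((hasDerivAt_pow m r).const_mul (√8 * (m + 1))).fun_div
      ((hasDerivAt_pow (2 * m + 2) r).const_add 1) hden.ne').congr_deriv ?_
    have hpow : (m : ℝ) * r ^ (m - 1) = m * r ^ m / r := by
      rcases m with _ | n
      · simp
      · rw [Nat.add_sub_cancel, pow_succ, ← mul_assoc, mul_div_cancel_right₀ _ hr.ne']
    rw [add_Atheta_Q, Q, hpow]
    push_cast
    field_simp
    ring

theorem L2sq_Q : L2sq (fun r ↦ (Q m r : ℂ)) = 8 * Real.pi * (m + 1) := by
  have hlim : Tendsto (fun r : ℝ ↦ -4 * ((m : ℝ) + 1) / (1 + r ^ (2 * m + 2))) atTop (𝓝 0) :=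
    tendsto_const_nhds.div_atTop (tendsto_atTop_add_const_left _ _ (tendsto_pow_atTop (by lia)))
  simp only [L2sq, Complex.norm_real, Real.norm_eq_abs, sq_abs]
  rw [integral_Ioi_of_hasDerivAt_of_tendsto'
    (fun r _ ↦ hasDerivAt_Q_sq_mul_self_primitive m r)
    (isSelfDualVortex_Q m).integrableOn_sq_mul_self hlim, zero_pow (by lia)]
  ring

theorem integrableOn_deriv_Q_sq_mul_self :
    IntegrableOn (fun r ↦ deriv (Q m) r ^ 2 * r) (Ioi 0) := by
  have hcont : Continuous (deriv (Q m)) := (contDiff_Q m).continuous_deriv_one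
  rw [← Ioc_union_Ioi_eq_Ioi zero_le_one]
  exact (Continuous.integrableOn_Ioc (by fun_prop)).union
    ((isSelfDualVortex_Q m).integrableOn_deriv_sq_mul_self zero_lt_one)

theorem deriv_Q_neg {r : ℝ} (hr : 1 < r) : deriv (Q m) r < 0 := by
  have hr0 : 0 < r := zero_lt_one.trans hr
  have hpow : 1 < r ^ (2 * m + 2) := one_lt_pow₀ hr (by lia)
  have hQ : 0 < Q m r := by unfold Q; positivity
  rw [((isSelfDualVortex_Q m).hasDerivAt r hr0).deriv, add_Atheta_Q]
  refine mul_neg_of_neg_of_pos (div_neg_of_neg_of_pos (div_neg_of_neg_of_pos ?_ ?_) hr0) hQ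
  · nlinarith [(m.cast_nonneg : (0 : ℝ) ≤ m)]
  · positivity

theorem integral_deriv_Q_sq_mul_self_pos :
    0 < ∫ r in Ioi (0 : ℝ), deriv (Q m) r ^ 2 * r := by
  have hnonneg : 0 ≤ᵐ[volume.restrict (Ioi 0)] fun r ↦ deriv (Q m) r ^ 2 * r :=
    ae_restrict_of_forall_mem measurableSet_Ioi fun r hr ↦ mul_nonneg (sq_nonneg _) (le_of_lt hr)
  have hsupport : Ioi 1 ⊆ (Function.support fun r ↦ deriv (Q m) r ^ 2 * r) ∩ Ioi 0 := fun r hr ↦ by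
    have hr0 : 0 < r := zero_lt_one.trans hr
    exact ⟨mul_ne_zero (pow_ne_zero 2 (deriv_Q_neg m hr).ne) hr0.ne', hr0⟩
  rw [setIntegral_pos_iff_support_of_nonneg_ae hnonneg (integrableOn_deriv_Q_sq_mul_self m)]
  exact lt_of_lt_of_le (by simp) (measure_mono hsupport)

end JackiwPi

theorem CSSeq.congr {m : ℕ} {u v : ℝ → ℝ → ℂ} {t r : ℝ} (hv : CSSeq m v t r) (huv : u =ᶠ[𝓝 t] v) :
    CSSeq m u t r := by
  have htime : (fun s ↦ u s r) =ᶠ[𝓝 t] fun s ↦ v s r := huv.fun_comp (· r)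
  unfold CSSeq at hv ⊢
  rwa [htime.deriv_eq, huv.self_of_nhds]

/-- the pseudoconformal blowup solution `S(t,r) = (1/|t|) Q(r/|t|) e^{i r²/(4t)}`
solves CSS for `t < 0`, has the soliton mass, and blows up in `Ḣ¹` as `t ↗ 0`. -/
theorem stmt5 (m : ℕ) (hm : 1 ≤ m) (S : ℝ → ℝ → ℂ)
    (hS : ∀ t < (0:ℝ), ∀ r : ℝ,
      S t r = ((1 / |t| : ℝ) : ℂ) * (Q m (r / |t|) : ℂ) *
        Complex.exp (Complex.I * (r : ℂ) ^ 2 / (4 * (t : ℂ)))) :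
    (∀ t < (0:ℝ), ∀ r : ℝ, 0 < r → CSSeq m S t r) ∧
    (∀ t < (0:ℝ), L2sq (S t) = 8 * Real.pi * (m + 1)) ∧
    Tendsto (fun t => Real.sqrt (2 * Real.pi * ∫ r in Set.Ioi (0:ℝ), ‖deriv (S t) r‖ ^ 2 * r))
      (nhdsWithin 0 (Set.Iio 0)) atTop := by
  have hslice : ∀ t < (0 : ℝ), S t = pseudoconformal (fun _ r ↦ (Q m r : ℂ)) t := fun t ht ↦
    funext (hS t ht)
  refine ⟨fun t ht r hr ↦ ?_, fun t ht ↦ ?_, ?_⟩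
  · refine ((isSelfDualVortex_Q m).CSSeq_pseudoconformal ht.ne hr).congr ?_
    filter_upwards [Iio_mem_nhds ht] using hslice
  · rw [hslice t ht, pseudoconformal, L2sq_pseudoconformalSlice ht.ne, L2sq_Q]
  · have hblowup := tendsto_sqrt_integral_norm_sq_deriv_pseudoconformalSlice_ofReal
      (fun r hr ↦ ((isSelfDualVortex_Q m).hasDerivAt r hr).differentiableAt)
      (integrableOn_deriv_Q_sq_mul_self m) (integrableOn_Q_sq_mul_pow m (by lia))
      (integral_deriv_Q_sq_mul_self_pos m)
    refine (hblowup.mono_left (nhdsLT_le_nhdsNE 0)).congr' ?_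
    filter_upwards [self_mem_nhdsWithin] with t ht
    rw [hslice t ht, pseudoconformal]
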